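/- Let p be a prime and f: Q → P an injective p-saturated homomorphism of fs monoids such that Q^gp, P^gp and P^gp/Q^gp are torsion free, and let J ⊆ Q be a radical ideal. Set J[1/p] := {y ∈ Q[1/p] : p^n·y ∈ J for some n ∈ ℕ} and P' := {q + r : q ∈ Q[1/p], r ∈ P} ⊆ P[1/p], sums being taken in P^gp ⊗_ℤ ℤ[1/p] via the induced maps. Then an element x ∈ P' fails to be J-minimal if and only if there exist q ∈ J[1/p] and r ∈ P with x = q + r. -/

import Mathlib

/-- `H` together with `ι : G →+ H` realizes the localization `G ⊗_ℤ ℤ[1/p]`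
of the abelian group `G` away from the prime `p`. -/
structure IsPLocalization (p : ℕ) {G H : Type*} [AddCommGroup G] [AddCommGroup H]
    (ι : G →+ H) : Prop where
  smul_bij : Function.Bijective (fun h : H => p • h)
  exists_rep : ∀ h : H, ∃ (n : ℕ) (g : G), p ^ n • h = ι g
  ker_eq : ∀ g : G, ι g = 0 ↔ ∃ n : ℕ, p ^ n • g = 0

/-- `P[1/p]`, viewed inside `H = P^gp ⊗_ℤ ℤ[1/p]`. -/
def pDiv (p : ℕ) {G H : Type*} [AddCommGroup G] [AddCommGroup H] (ι : G →+ H)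
    (P : AddSubmonoid G) : Set H :=
  {h | ∃ n : ℕ, p ^ n • h ∈ ι '' (P : Set G)}

/-- `x ∈ P` is `J`-minimal if `x` cannot be written as `x = r + f q` with
`r ∈ P` and `q ∈ J`. -/
def JMinimal {GQ GP : Type*} [AddCommGroup GQ] [AddCommGroup GP]
    (φ : GQ →+ GP) (P : AddSubmonoid GP) (J : Set GQ) (x : GP) : Prop :=
  ¬ ∃ r ∈ P, ∃ q ∈ J, x = r + φ q

/-- An element `x ∈ P[1/p]` is `J`-minimal if `p^n • x` is a `J`-minimal element
of `P` for some `n ∈ ℕ` with `p^n • x ∈ P`. -/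
def JMinimalLoc (p : ℕ) {GQ GP HP : Type*} [AddCommGroup GQ] [AddCommGroup GP]
    [AddCommGroup HP] (φ : GQ →+ GP) (P : AddSubmonoid GP) (J : Set GQ)
    (ιP : GP →+ HP) (x : HP) : Prop :=
  ∃ (n : ℕ) (y : GP), y ∈ P ∧ ιP y = p ^ n • x ∧ JMinimal φ P J y

/-- `J[1/p] = {y ∈ Q[1/p] | p^n • y ∈ J for some n ∈ ℕ}`. -/
def jDiv (p : ℕ) {GQ HQ : Type*} [AddCommGroup GQ] [AddCommGroup HQ]
    (ιQ : GQ →+ HQ) (Q : AddSubmonoid GQ) (J : Set GQ) : Set HQ :=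
  {y | y ∈ pDiv p ιQ Q ∧ ∃ n : ℕ, p ^ n • y ∈ ιQ '' J}

/-!
Write `x = ψ q + ιP r` with `p ^ k • q = ιQ a` and `a ∈ Q`, so that `p ^ k • x` is the image of
`z = p ^ k • r + φ a`. Quasi-saturation and radicality of `J` show that `p • y` is `J`-minimal
exactly when `y` is; hence the `J`-minimality of `x` does not depend on the multiple used to test
it, and may be tested on `z`. If `z` is not `J`-minimal, quasi-saturation yields `b` with
`r + φ b ∈ P` and `a - p ^ k • b ∈ J`, and `x = ψ (q - ιQ b) + ιP (r + φ b)` is the decomposition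
sought.
-/

theorem mem_addSubgroupClosure_iff_exists_sub {G : Type*} [AddCommGroup G] {P : AddSubmonoid G}
    {g : G} : g ∈ AddSubgroup.closure (P : Set G) ↔ ∃ a ∈ P, ∃ b ∈ P, a - b = g := by
  rw [← AddSubgroup.mem_toAddSubmonoid, AddSubgroup.closure_toAddSubmonoid,
    AddSubmonoid.closure_union, AddSubmonoid.closure_neg, AddSubmonoid.closure_eq,
    AddSubmonoid.mem_sup]
  constructor
  · rintro ⟨a, ha, b, hb, rfl⟩
    exact ⟨a, ha, -b, hb, sub_neg_eq_add a b⟩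
  · rintro ⟨a, ha, b, hb, rfl⟩
    exact ⟨a, ha, -b, by simpa using hb, (sub_eq_add_neg a b).symm⟩

section QuasiSaturated

variable {GQ GP : Type*} [AddCommGroup GQ] [AddCommGroup GP]
  {φ : GQ →+ GP} {Q : AddSubmonoid GQ} {P : AddSubmonoid GP}

/-- `n`-quasi-saturation of a homomorphism `Q → P`, for an arbitrary `n`, phrased with elements
`g`, `h` of the ambient groups in place of the differences `r₁ - r₂`, `q₁ - q₂`. -/
def IsQuasiSaturated (n : ℕ) (φ : GQ →+ GP) (Q : AddSubmonoid GQ) (P : AddSubmonoid GP) : Prop :=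
  ∀ (g : GP) (h : GQ), n • g + φ h ∈ P → ∃ b : GQ, g + φ b ∈ P ∧ h - n • b ∈ Q

namespace IsQuasiSaturated

theorem of_closure_eq_top {n : ℕ} (hQ : AddSubgroup.closure (Q : Set GQ) = ⊤)
    (hP : AddSubgroup.closure (P : Set GP) = ⊤)
    (hsat : ∀ r₁ ∈ P, ∀ r₂ ∈ P, ∀ q₁ ∈ Q, ∀ q₂ ∈ Q, n • (r₁ - r₂) + φ (q₁ - q₂) ∈ P →
      ∃ x : GQ, (r₁ - r₂) + φ x ∈ P ∧ (q₁ - q₂) - n • x ∈ Q) :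
    IsQuasiSaturated n φ Q P := by
  intro g h
  obtain ⟨r₁, hr₁, r₂, hr₂, rfl⟩ := mem_addSubgroupClosure_iff_exists_sub.1
    (hP ▸ AddSubgroup.mem_top g)
  obtain ⟨q₁, hq₁, q₂, hq₂, rfl⟩ := mem_addSubgroupClosure_iff_exists_sub.1
    (hQ ▸ AddSubgroup.mem_top h)
  exact hsat r₁ hr₁ r₂ hr₂ q₁ hq₁ q₂ hq₂

theorem one : IsQuasiSaturated 1 φ Q P :=
  fun g h hgh ↦ ⟨h, by simpa only [one_nsmul] using hgh, by simp⟩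

theorem mul {m n : ℕ} (hm : IsQuasiSaturated m φ Q P) (hn : IsQuasiSaturated n φ Q P) :
    IsQuasiSaturated (m * n) φ Q P := by
  intro g h hgh
  rw [mul_nsmul'] at hgh
  obtain ⟨c, hgc, hhc⟩ := hm (n • g) h hgh
  obtain ⟨b, hgb, hcb⟩ := hn g c hgc
  have hsplit : h - (m * n) • b = (h - m • c) + m • (c - n • b) := by
    rw [nsmul_sub, mul_nsmul', sub_add_sub_cancel]
  exact ⟨b, hgb, hsplit ▸ Q.add_mem hhc (Q.nsmul_mem hcb m)⟩

theorem pow {n : ℕ} (hn : IsQuasiSaturated n φ Q P) (k : ℕ) : IsQuasiSaturated (n ^ k) φ Q P := by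
  induction k with
  | zero => exact pow_zero n ▸ one
  | succ k ih => exact pow_succ n k ▸ ih.mul hn

theorem exists_sub_nsmul_mem {n : ℕ} (hn : IsQuasiSaturated n φ Q P) {J : Set GQ}
    (hJideal : ∀ x ∈ J, ∀ q ∈ Q, x + q ∈ J) {g : GP} {h : GQ}
    (hgh : ¬ JMinimal φ P J (n • g + φ h)) : ∃ b : GQ, g + φ b ∈ P ∧ h - n • b ∈ J := by
  obtain ⟨r, hr, j, hj, hrj⟩ := not_not.1 hgh
  have hdiff : n • g + φ (h - j) = r := by
    rw [map_sub, ← add_sub_assoc, hrj, add_sub_cancel_right]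
  obtain ⟨b, hgb, hb⟩ := hn g (h - j) (hdiff ▸ hr)
  have hsplit : h - n • b = j + (h - j - n • b) := by abel
  exact ⟨b, hgb, hsplit ▸ hJideal j hj _ hb⟩

end IsQuasiSaturated

theorem nsmul_mem_of_add_mem {J : Set GQ} (hJQ : J ⊆ Q) (hJideal : ∀ x ∈ J, ∀ q ∈ Q, x + q ∈ J)
    {n : ℕ} (hn : n ≠ 0) {j : GQ} (hj : j ∈ J) : n • j ∈ J := by
  obtain ⟨m, rfl⟩ := Nat.exists_eq_succ_of_ne_zero hn
  exact succ_nsmul' j m ▸ hJideal j hj _ (Q.nsmul_mem (hJQ hj) m)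

theorem jMinimal_nsmul_iff {n : ℕ} (hn : n ≠ 0) (hsat : IsQuasiSaturated n φ Q P)
    {J : Set GQ} (hJQ : J ⊆ Q) (hJideal : ∀ x ∈ J, ∀ q ∈ Q, x + q ∈ J)
    (hJrad : ∀ g : GQ, n • g ∈ J → g ∈ J) {y : GP} :
    JMinimal φ P J (n • y) ↔ JMinimal φ P J y := by
  refine not_iff_not.1 ⟨fun hy ↦ ?_, fun hy ↦ ?_⟩
  · obtain ⟨b, hyb, hb⟩ := hsat.exists_sub_nsmul_mem hJideal (g := y) (h := 0) (by simpa using hy)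
    have hbJ : -b ∈ J := hJrad _ (by simpa using hb)
    exact not_not.2 ⟨y + φ b, hyb, -b, hbJ, by simp⟩
  · obtain ⟨r, hr, j, hj, rfl⟩ := not_not.1 hy
    exact not_not.2 ⟨n • r, P.nsmul_mem hr n, n • j, nsmul_mem_of_add_mem hJQ hJideal hn hj,
      by rw [nsmul_add, map_nsmul]⟩

theorem jMinimal_pow_nsmul_iff {n : ℕ} (hn : n ≠ 0) (hsat : IsQuasiSaturated n φ Q P)
    {J : Set GQ} (hJQ : J ⊆ Q) (hJideal : ∀ x ∈ J, ∀ q ∈ Q, x + q ∈ J)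
    (hJrad : ∀ g : GQ, n • g ∈ J → g ∈ J) (k : ℕ) {y : GP} :
    JMinimal φ P J (n ^ k • y) ↔ JMinimal φ P J y := by
  induction k with
  | zero => rw [pow_zero, one_nsmul]
  | succ k ih => rw [pow_succ', mul_nsmul', jMinimal_nsmul_iff hn hsat hJQ hJideal hJrad, ih]

end QuasiSaturated

theorem IsPLocalization.exists_pow_nsmul_eq {p : ℕ} {G H : Type*} [AddCommGroup G] [AddCommGroup H]
    {ι : G →+ H} (hι : IsPLocalization p ι) {a b : G} (hab : ι a = ι b) :
    ∃ n : ℕ, p ^ n • a = p ^ n • b := by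
  obtain ⟨n, hn⟩ := (hι.ker_eq (a - b)).1 (by rw [map_sub, hab, sub_self])
  exact ⟨n, sub_eq_zero.1 (by rwa [← nsmul_sub])⟩

section Localization

variable {p : ℕ} {GQ GP HQ HP : Type*} [AddCommGroup GQ] [AddCommGroup GP]
  [AddCommGroup HQ] [AddCommGroup HP] {Q : AddSubmonoid GQ} {P : AddSubmonoid GP}
  {φ : GQ →+ GP} {J : Set GQ} {ιQ : GQ →+ HQ} {ιP : GP →+ HP} {ψ : HQ →+ HP}

theorem jMinimalLoc_iff (hp : p ≠ 0) (hsat : IsQuasiSaturated p φ Q P)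
    (hJQ : J ⊆ Q) (hJideal : ∀ x ∈ J, ∀ q ∈ Q, x + q ∈ J)
    (hJrad : ∀ g : GQ, p • g ∈ J → g ∈ J) (hιP : IsPLocalization p ιP)
    {x : HP} {k : ℕ} {z : GP} (hz : z ∈ P) (hzx : ιP z = p ^ k • x) :
    JMinimalLoc p φ P J ιP x ↔ JMinimal φ P J z := by
  refine ⟨?_, fun hmin ↦ ⟨k, z, hz, hzx, hmin⟩⟩
  rintro ⟨n, y, -, hyx, hmin⟩
  have himage : ιP (p ^ k • y) = ιP (p ^ n • z) := by
    rw [map_nsmul, map_nsmul, hyx, hzx, nsmul_left_comm]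
  obtain ⟨s, hs⟩ := hιP.exists_pow_nsmul_eq himage
  have hpow (m : ℕ) {w : GP} := jMinimal_pow_nsmul_iff hp hsat hJQ hJideal hJrad m (y := w)
  rwa [← hpow k, ← hpow s, hs, hpow s, hpow n] at hmin

theorem map_pow_nsmul_add (hψ : ∀ g : GQ, ψ (ιQ g) = ιP (φ g)) {k : ℕ} {q : HQ} {a : GQ}
    (haq : ιQ a = p ^ k • q) (r : GP) : ιP (p ^ k • r + φ a) = p ^ k • (ψ q + ιP r) := by
  rw [map_add, map_nsmul, ← hψ, haq, map_nsmul, ← nsmul_add, add_comm]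

theorem not_jMinimal_iff_general (hp : p ≠ 0)
    (hmap : ∀ x ∈ Q, φ x ∈ P) (hsat : IsQuasiSaturated p φ Q P)
    (hJQ : J ⊆ Q) (hJideal : ∀ x ∈ J, ∀ q ∈ Q, x + q ∈ J)
    (hJrad : ∀ g : GQ, p • g ∈ J → g ∈ J)
    (_hιQ : IsPLocalization p ιQ) (hιP : IsPLocalization p ιP)
    (hψ : ∀ g : GQ, ψ (ιQ g) = ιP (φ g))
    (x : HP) (hx : ∃ q ∈ pDiv p ιQ Q, ∃ r ∈ P, x = ψ q + ιP r) :
    ¬ JMinimalLoc p φ P J ιP x ↔ ∃ q ∈ jDiv p ιQ Q J, ∃ r ∈ P, x = ψ q + ιP r := by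
  have hmem (k : ℕ) {r : GP} (hr : r ∈ P) {a : GQ} (ha : a ∈ Q) : p ^ k • r + φ a ∈ P :=
    P.add_mem (P.nsmul_mem hr _) (hmap a ha)
  constructor
  · obtain ⟨q, ⟨k, a, ha, haq⟩, r, hr, rfl⟩ := hx
    rw [jMinimalLoc_iff hp hsat hJQ hJideal hJrad hιP (hmem k hr ha) (map_pow_nsmul_add hψ haq r)]
    intro hmin
    obtain ⟨b, hrb, hab⟩ := (hsat.pow k).exists_sub_nsmul_mem hJideal hmin
    have hqb : ιQ (a - p ^ k • b) = p ^ k • (q - ιQ b) := by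
      rw [map_sub, map_nsmul, haq, nsmul_sub]
    refine ⟨q - ιQ b, ⟨⟨k, _, hJQ hab, hqb⟩, k, _, hab, hqb⟩, r + φ b, hrb, ?_⟩
    rw [map_sub, map_add, hψ]
    abel
  · rintro ⟨q, ⟨-, k, j, hj, hjq⟩, r, hr, rfl⟩
    rw [jMinimalLoc_iff hp hsat hJQ hJideal hJrad hιP (hmem k hr (hJQ hj))
      (map_pow_nsmul_add hψ hjq r)]
    exact not_not.2 ⟨p ^ k • r, P.nsmul_mem hr _, j, hj, rfl⟩

end Localization

/-- Let `p` be a prime, `f : Q → P` an injective `p`-saturated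
homomorphism of fs monoids with `Q^gp`, `P^gp`, `P^gp/Q^gp` torsion free, and
`J ⊆ Q` a radical ideal.  Set `J[1/p] = {y ∈ Q[1/p] | p^n • y ∈ J for some n}`
and `P' = {q + r | q ∈ Q[1/p], r ∈ P} ⊆ P[1/p]` (sums taken in
`P^gp ⊗ ℤ[1/p]` via the induced maps).  Then an element `x ∈ P'` fails to be
`J`-minimal if and only if there exist `q ∈ J[1/p]` and `r ∈ P` with
`x = q + r`. -/
theorem not_jMinimal_iff
    (p : ℕ) (hp : p.Prime)
    {GQ GP HQ HP : Type*} [AddCommGroup GQ] [AddCommGroup GP]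
    [AddCommGroup HQ] [AddCommGroup HP]
    (Q : AddSubmonoid GQ) (P : AddSubmonoid GP)
    (φ : GQ →+ GP) (hmap : ∀ x ∈ Q, φ x ∈ P)
    (hinj : ∀ a ∈ Q, ∀ b ∈ Q, φ a = φ b → a = b)
    (hQGen : AddSubgroup.closure (Q : Set GQ) = ⊤)
    (hPGen : AddSubgroup.closure (P : Set GP) = ⊤)
    (hQFG : AddMonoid.FG ↥Q) (hPFG : AddMonoid.FG ↥P)
    (hQsat : ∀ g : GQ, ∀ n : ℕ, 0 < n → n • g ∈ Q → g ∈ Q)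
    (hPsat : ∀ g : GP, ∀ n : ℕ, 0 < n → n • g ∈ P → g ∈ P)
    (hTFQ : ∀ (g : GQ) (n : ℕ), 0 < n → n • g = 0 → g = 0)
    (hTFP : ∀ (g : GP) (n : ℕ), 0 < n → n • g = 0 → g = 0)
    (hTFquot : ∀ (g : GP) (n : ℕ), 0 < n → n • g ∈ AddMonoidHom.range φ →
      g ∈ AddMonoidHom.range φ)
    (hpqs : ∀ r₁ ∈ P, ∀ r₂ ∈ P, ∀ q₁ ∈ Q, ∀ q₂ ∈ Q,
        p • (r₁ - r₂) + φ (q₁ - q₂) ∈ P →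
        ∃ x : GQ, (r₁ - r₂) + φ x ∈ P ∧ (q₁ - q₂) - p • x ∈ Q)
    (hint : ∀ a₁ ∈ Q, ∀ a₂ ∈ Q, ∀ b₁ ∈ P, ∀ b₂ ∈ P,
        φ a₁ + b₁ = φ a₂ + b₂ →
        ∃ a₃ ∈ Q, ∃ a₄ ∈ Q, ∃ b ∈ P,
          b₁ = φ a₃ + b ∧ b₂ = φ a₄ + b ∧ a₁ + a₃ = a₂ + a₄)
    (J : Set GQ) (hJQ : J ⊆ (Q : Set GQ))
    (hJideal : ∀ x ∈ J, ∀ q ∈ Q, x + q ∈ J)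
    (hJrad : ∀ x ∈ Q, (∃ n : ℕ, 0 < n ∧ n • x ∈ J) → x ∈ J)
    (ιQ : GQ →+ HQ) (hlocQ : IsPLocalization p ιQ)
    (ιP : GP →+ HP) (hlocP : IsPLocalization p ιP)
    (ψ : HQ →+ HP) (hψ : ∀ g : GQ, ψ (ιQ g) = ιP (φ g)) :
    ∀ x : HP, (∃ q ∈ pDiv p ιQ Q, ∃ r ∈ P, x = ψ q + ιP r) →
      (¬ JMinimalLoc p φ P J ιP x ↔
        ∃ q ∈ jDiv p ιQ Q J, ∃ r ∈ P, x = ψ q + ιP r) := by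
  exact not_jMinimal_iff_general hp.ne_zero hmap (.of_closure_eq_top hQGen hPGen hpqs) hJQ hJideal
    (fun g hg ↦ hJrad g (hQsat g p hp.pos (hJQ hg)) ⟨p, hp.pos, hg⟩) hlocQ hlocP hψ
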